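/- Let 0 < α < 1, t > 0, let k ≥ 1 be an integer and let x > π(2k+1)/2. Then a_k(x,t) ≤ (x/((2k−1)π)) · ∫_{1−(π(2k+1)/(2x))²}^{1−(π(2k−1)/(2x))²} E_α(t^α ρ) dρ. -/

import Mathlib

open Real MeasureTheory

/-- The Mittag-Leffler function `E_α(r) = ∑ r^k / Γ(1+kα)`. -/
noncomputable def mittagLeffler (α r : ℝ) : ℝ :=
  ∑' k : ℕ, r ^ k / Real.Gamma (1 + k * α)

/-- The coefficients `a_k(x,t)` obtained by splitting the Fourier integral of the
fundamental solution over the intervals where `cos (xξ)` has a fixed sign. -/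
noncomputable def aCoeff (α t x : ℝ) (k : ℕ) : ℝ :=
  if k = 0 then
    ∫ ξ in (0 : ℝ)..(π / (2 * x)),
      mittagLeffler α ((1 - ξ ^ 2) * t ^ α) * Real.cos (x * ξ)
  else
    (-1 : ℝ) ^ k *
      ∫ ξ in (π * (2 * (k : ℝ) - 1) / (2 * x))..(π * (2 * (k : ℝ) + 1) / (2 * x)),
        mittagLeffler α ((1 - ξ ^ 2) * t ^ α) * Real.cos (x * ξ)

/-! Substituting `ρ = 1 - ξ²` turns the right-hand side into the integral over `[A, B]` of
`E_α(t^α (1 - ξ²)) · (ξ / A)`, where `A = π(2k-1)/(2x)` and `B = π(2k+1)/(2x)`. There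
`ξ / A ≥ 1 ≥ (-1)^k cos (xξ)`, and `B ≤ 1` keeps the argument of `E_α` nonnegative, hence `E_α ≥ 0`:
the integrands compare pointwise. Continuity of `E_α` holds because `R^s e^{-R} ≤ Γ(1+s)`, taken at
`s = kα` and `R = r^{1/α}`, bounds every term `r^k / Γ(1+kα)` by `exp (r^{1/α})` for `r ≥ 0`, so
that the power series has infinite radius of convergence. -/

section MittagLeffler

lemma rpow_mul_exp_neg_le_Gamma_one_add {s R : ℝ} (hs : 0 ≤ s) (hR : 0 ≤ R) :
    R ^ s * exp (-R) ≤ Gamma (1 + s) := by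
  have integrable : IntegrableOn (fun y : ℝ ↦ exp (-y) * y ^ s) (Set.Ioi 0) := by
    simpa using GammaIntegral_convergent (s := 1 + s) (by positivity)
  have Ioi_subset : Set.Ioi R ⊆ Set.Ioi 0 := Set.Ioi_subset_Ioi hR
  calc R ^ s * exp (-R) = ∫ y in Set.Ioi R, R ^ s * exp (-y) := by
        rw [integral_const_mul, integral_exp_neg_Ioi]
    _ ≤ ∫ y in Set.Ioi R, exp (-y) * y ^ s := by
        refine setIntegral_mono_on ((integrableOn_exp_neg_Ioi R).const_mul _)
          (integrable.mono_set Ioi_subset) measurableSet_Ioi fun y (hy : R < y) ↦ ?_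
        rw [mul_comm]
        gcongr
    _ ≤ ∫ y in Set.Ioi 0, exp (-y) * y ^ s := by
        refine setIntegral_mono_set integrable ?_ Ioi_subset.eventuallyLE
        filter_upwards [ae_restrict_mem measurableSet_Ioi] with y (hy : 0 < y)
        exact mul_nonneg (exp_pos _).le (rpow_nonneg hy.le s)
    _ = Gamma (1 + s) := by
        rw [Gamma_eq_integral (by positivity), add_sub_cancel_left]

variable {α : ℝ}

lemma Gamma_one_add_natCast_mul_pos (hα : 0 ≤ α) (k : ℕ) : 0 < Gamma (1 + k * α) :=
  Gamma_pos_of_pos (by positivity)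

lemma pow_div_Gamma_le_exp_rpow_inv (hα : 0 < α) {r : ℝ} (hr : 0 ≤ r) (k : ℕ) :
    r ^ k / Gamma (1 + k * α) ≤ exp (r ^ α⁻¹) := by
  have rpow_eq_pow : (r ^ α⁻¹) ^ (k * α) = r ^ k := by
    rw [← rpow_mul hr, mul_comm (k : ℝ), inv_mul_cancel_left₀ hα.ne', rpow_natCast]
  have le_Gamma := rpow_mul_exp_neg_le_Gamma_one_add (s := k * α) (R := r ^ α⁻¹)
    (by positivity) (by positivity)
  rw [rpow_eq_pow, exp_neg, ← div_eq_mul_inv, div_le_iff₀ (exp_pos _)] at le_Gamma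
  rwa [div_le_iff₀' (Gamma_one_add_natCast_mul_pos hα.le k)]

/-- The power series `∑ r^k / Γ(1+kα)` defining the Mittag-Leffler function, in the form that gives
access to Mathlib's theory of the radius of convergence. -/
noncomputable def mittagLefflerSeries (α : ℝ) : FormalMultilinearSeries ℝ ℝ ℝ :=
  .ofScalars ℝ fun k ↦ (Gamma (1 + k * α))⁻¹

lemma mittagLefflerSeries_sum (α : ℝ) : (mittagLefflerSeries α).sum = mittagLeffler α := by
  funext r
  refine tsum_congr fun k ↦ ?_
  rw [mittagLefflerSeries, FormalMultilinearSeries.ofScalars_apply_eq, smul_eq_mul, mul_comm,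
    div_eq_mul_inv]

lemma mittagLefflerSeries_radius (hα : 0 < α) : (mittagLefflerSeries α).radius = ⊤ := by
  refine ENNReal.eq_top_of_forall_nnreal_le fun r ↦
    (mittagLefflerSeries α).le_radius_of_bound (exp (r ^ α⁻¹)) fun k ↦ ?_
  rw [mittagLefflerSeries, FormalMultilinearSeries.ofScalars_norm, norm_inv,
    norm_of_nonneg (Gamma_one_add_natCast_mul_pos hα.le k).le, inv_mul_eq_div]
  exact pow_div_Gamma_le_exp_rpow_inv hα r.coe_nonneg k

lemma continuous_mittagLeffler (hα : 0 < α) : Continuous (mittagLeffler α) := by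
  have continuousOn := (mittagLefflerSeries α).continuousOn
  rwa [mittagLefflerSeries_sum, mittagLefflerSeries_radius hα, Metric.eball_top,
    continuousOn_univ] at continuousOn

lemma mittagLeffler_nonneg (hα : 0 ≤ α) {r : ℝ} (hr : 0 ≤ r) : 0 ≤ mittagLeffler α r :=
  tsum_nonneg fun k ↦ div_nonneg (pow_nonneg hr k) (Gamma_one_add_natCast_mul_pos hα k).le

end MittagLeffler

section Substitution

variable {g : ℝ → ℝ}

lemma integral_comp_const_sub_sq_mul_two_mul (hg : Continuous g) (a b c : ℝ) :
    ∫ ξ in a..b, g (c - ξ ^ 2) * (2 * ξ) = ∫ ρ in (c - b ^ 2)..(c - a ^ 2), g ρ := by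
  have substitution := intervalIntegral.integral_comp_mul_deriv (a := a) (b := b)
    (f := fun ξ ↦ c - ξ ^ 2) (f' := fun ξ ↦ -(2 * ξ))
    (fun ξ _ ↦ by simpa using (hasDerivAt_pow 2 ξ).const_sub c) (by fun_prop) hg
  rw [intervalIntegral.integral_symm (c - a ^ 2), ← substitution, ← intervalIntegral.integral_neg]
  simp only [Function.comp_apply, mul_neg, neg_neg]

lemma integral_comp_const_sub_sq_mul_le {φ : ℝ → ℝ} {a b c : ℝ} (hg : Continuous g)
    (hφ : Continuous φ) (ha : 0 < a) (hab : a ≤ b)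
    (g_nonneg : ∀ ρ ∈ Set.Icc (c - b ^ 2) (c - a ^ 2), 0 ≤ g ρ)
    (φ_le_one : ∀ ξ ∈ Set.Icc a b, φ ξ ≤ 1) :
    ∫ ξ in a..b, g (c - ξ ^ 2) * φ ξ ≤
      (2 * a)⁻¹ * ∫ ρ in (c - b ^ 2)..(c - a ^ 2), g ρ := by
  rw [← integral_comp_const_sub_sq_mul_two_mul hg, ← intervalIntegral.integral_const_mul]
  refine intervalIntegral.integral_mono_on hab
    (Continuous.intervalIntegrable (by fun_prop) _ _)
    (Continuous.intervalIntegrable (by fun_prop) _ _) fun ξ hξ ↦ ?_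
  obtain ⟨haξ, hξb⟩ := hξ
  have hξ₀ : 0 ≤ ξ := ha.le.trans haξ
  have g_comp_nonneg : 0 ≤ g (c - ξ ^ 2) := g_nonneg _ ⟨by gcongr, by gcongr⟩
  have one_le : 1 ≤ (2 * a)⁻¹ * (2 * ξ) := by
    rw [inv_mul_eq_div, one_le_div (by positivity)]
    gcongr
  calc g (c - ξ ^ 2) * φ ξ
      ≤ g (c - ξ ^ 2) * ((2 * a)⁻¹ * (2 * ξ)) := by
        gcongr
        exact (φ_le_one ξ ⟨haξ, hξb⟩).trans one_le
    _ = (2 * a)⁻¹ * (g (c - ξ ^ 2) * (2 * ξ)) := mul_left_comm _ _ _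

end Substitution

lemma aCoeff_of_ne_zero (α t x : ℝ) {k : ℕ} (hk : k ≠ 0) :
    aCoeff α t x k =
      ∫ ξ in (π * (2 * (k : ℝ) - 1) / (2 * x))..(π * (2 * (k : ℝ) + 1) / (2 * x)),
        mittagLeffler α (t ^ α * (1 - ξ ^ 2)) * ((-1) ^ k * cos (x * ξ)) := by
  rw [aCoeff, if_neg hk, ← intervalIntegral.integral_const_mul]
  simp only [mul_comm (t ^ α), mul_left_comm ((-1 : ℝ) ^ k)]

lemma neg_one_pow_mul_cos_le_one (k : ℕ) (y : ℝ) : (-1) ^ k * cos y ≤ 1 := by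
  rw [← cos_add_nat_mul_pi]
  exact cos_le_one _

theorem aCoeff_upper_bound_general (α t x : ℝ) (k : ℕ) (hα : 0 < α) (ht : 0 ≤ t)
    (hk : 1 ≤ k) (hx : π * (2 * (k : ℝ) + 1) / 2 ≤ x) :
    aCoeff α t x k ≤
      (x / ((2 * (k : ℝ) - 1) * π)) *
        ∫ ρ in (1 - (π * (2 * (k : ℝ) + 1) / (2 * x)) ^ 2)..(1 -
            (π * (2 * (k : ℝ) - 1) / (2 * x)) ^ 2),
          mittagLeffler α (t ^ α * ρ) := by
  have hx₀ : 0 < x := lt_of_lt_of_le (by positivity) hx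
  have hk₀ : 0 < 2 * (k : ℝ) - 1 := by
    have : (1 : ℝ) ≤ k := mod_cast hk
    linarith
  have right_le_one : π * (2 * (k : ℝ) + 1) / (2 * x) ≤ 1 := by
    rw [div_le_one (by positivity)]
    linarith
  have factor_eq : x / ((2 * (k : ℝ) - 1) * π) = (2 * (π * (2 * k - 1) / (2 * x)))⁻¹ := by
    field_simp
  have mittagLeffler_continuous := continuous_mittagLeffler hα
  rw [aCoeff_of_ne_zero α t x (by lia), factor_eq]
  refine integral_comp_const_sub_sq_mul_le (g := fun ρ ↦ mittagLeffler α (t ^ α * ρ))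
    (by fun_prop) (by fun_prop) (by positivity) (by gcongr; linarith) (fun ρ hρ ↦ ?_)
    fun ξ _ ↦ neg_one_pow_mul_cos_le_one k (x * ξ)
  have ρ_nonneg : 0 ≤ ρ := (sub_nonneg.2 (pow_le_one₀ (by positivity) right_le_one)).trans hρ.1
  exact mittagLeffler_nonneg hα.le (mul_nonneg (rpow_nonneg ht α) ρ_nonneg)

theorem aCoeff_upper_bound (α t x : ℝ) (k : ℕ) (hα : 0 < α) (hα1 : α < 1) (ht : 0 < t)
    (hk : 1 ≤ k) (hx : π * (2 * (k : ℝ) + 1) / 2 < x) :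
    aCoeff α t x k ≤
      (x / ((2 * (k : ℝ) - 1) * π)) *
        ∫ ρ in (1 - (π * (2 * (k : ℝ) + 1) / (2 * x)) ^ 2)..(1 -
            (π * (2 * (k : ℝ) - 1) / (2 * x)) ^ 2),
          mittagLeffler α (t ^ α * ρ) :=
  aCoeff_upper_bound_general α t x k hα ht.le hk hx.le
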